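/- arXiv:1412.5625 — 2 statements merged into one kernel-verified Lean document; each statement's English description precedes it below -/
import Mathlib

section
/- Let φ : M₄(ℝ) → ℂ be continuous with φ(γ·g) = φ(g) for every g ∈ M₄(ℝ) and every integer 4×4 matrix γ of determinant 1, and let w₃ be the integer matrix with rows (0,0,1,0), (0,1,0,0), (−1,0,0,0), (0,0,0,1). Then for every integer m and every g ∈ M₄(ℝ): ∫_{[0,1]⁵} ∫₀¹ φ( n(0,0,x,0,0,0) · w₃ · n(u₁,u₂,u₃,u₄,u₅,0) · g ) · e(−m·x) dx du₁ du₂ du₃ du₄ du₅ = ∫_{[0,1]⁶} φ( n(x₁,x₂,x₃,x₄,x₅,x₆) · g ) · e(−m·x₆) dx₁⋯dx₆. (The degenerate Whittaker vector on N with character on the third simple root expressed via the minimal-orbit Fourier coefficient; Table 3 / Appendix A.) -/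
/-!
Conjugation by `w₃` carries the `(1,4)` root subgroup to the `(3,4)` root subgroup, so
`n 0 0 x 0 0 0 * w₃ * n u₁ u₂ u₃ u₄ u₅ 0 = w₃ * n u₁ u₂ u₃ u₄ u₅ x` (`n_mul_w₃_mul_n`).
As `w₃` is integral of determinant one, left invariance of `φ` removes it, and the two integrands
coincide. The two sides then differ only in the order of integration: the variable of the character
is innermost on the left and outermost on the right. Continuity of `φ` allows it to be moved
outwards one step at a time by Fubini on compact squares (`integral_swap_unit`).
-/

open MeasureTheory

/-- `e(t) = exp(2πit)`. -/
noncomputable def e (t : ℝ) : ℂ := Complex.exp (2 * (Real.pi : ℂ) * Complex.I * (t : ℂ))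

/-- The upper unitriangular `4×4` matrix with rows `(1,x₁,x₂,x₃)`, `(0,1,x₄,x₅)`,
`(0,0,1,x₆)`, `(0,0,0,1)`. -/
noncomputable def n (x₁ x₂ x₃ x₄ x₅ x₆ : ℝ) : Matrix (Fin 4) (Fin 4) ℝ :=
  !![1, x₁, x₂, x₃; 0, 1, x₄, x₅; 0, 0, 1, x₆; 0, 0, 0, 1]

/-- The Weyl element `w₃` as an integer matrix of determinant one. -/
def w₃ : Matrix (Fin 4) (Fin 4) ℤ :=
  !![0, 0, 1, 0; 0, 1, 0, 0; -1, 0, 0, 0; 0, 0, 0, 1]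

theorem n_mul_w₃_mul_n (u₁ u₂ u₃ u₄ u₅ x : ℝ) :
    n 0 0 x 0 0 0 * w₃.map (fun z => (z : ℝ)) * n u₁ u₂ u₃ u₄ u₅ 0 =
      w₃.map (fun z => (z : ℝ)) * n u₁ u₂ u₃ u₄ u₅ x := by
  ext i j
  fin_cases i <;> fin_cases j <;>
    simp [n, w₃, Matrix.mul_apply, Matrix.vecMul, dotProduct, Fin.sum_univ_four]

theorem w₃_det : w₃.det = 1 := by
  simp [w₃, Matrix.det_succ_row_zero, Fin.sum_univ_succ, Fin.succAbove]

theorem integral_swap_unit {f : ℝ → ℝ → ℂ} (hf : Continuous fun p : ℝ × ℝ => f p.1 p.2) :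
    ∫ u in (0:ℝ)..1, ∫ x in (0:ℝ)..1, f u x = ∫ x in (0:ℝ)..1, ∫ u in (0:ℝ)..1, f u x := by
  have hI : Integrable (Function.uncurry f)
      ((volume.restrict (Set.uIoc (0:ℝ) 1)).prod (volume.restrict (Set.Ioc (0:ℝ) 1))) := by
    rw [Measure.prod_restrict]
    refine (hf.continuousOn.integrableOn_compact (isCompact_uIcc (a := (0:ℝ)) (b := 1) |>.prod
      (isCompact_Icc (a := (0:ℝ)) (b := 1)))).mono_set ?_
    exact Set.prod_mono Set.uIoc_subset_uIcc Set.Ioc_subset_Icc_self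
  have h := intervalIntegral_integral_swap hI
  simpa only [← intervalIntegral.integral_of_le (zero_le_one' ℝ)] using h

theorem continuous_integral_unit {P : Type*} [TopologicalSpace P]
    {f : P → ℝ → ℂ} (hf : Continuous fun p : P × ℝ => f p.1 p.2) :
    Continuous fun p => ∫ u in (0:ℝ)..1, f p u :=
  intervalIntegral.continuous_parametric_intervalIntegral_of_continuous' hf 0 1

/-- In a six-fold iterated integral of a continuous function over the unit cube, the innermost
variable may be made the outermost one. Joint continuity is stated as continuity of every composite
with six continuous functions, the form in which each Fubini step consumes it. -/
theorem integral_rotate {F : ℝ → ℝ → ℝ → ℝ → ℝ → ℝ → ℂ}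
    (hF : ∀ {P : Type} [TopologicalSpace P] {a b c d k x : P → ℝ}, Continuous a → Continuous b →
      Continuous c → Continuous d → Continuous k → Continuous x →
      Continuous fun p => F (a p) (b p) (c p) (d p) (k p) (x p)) :
    (∫ a in (0:ℝ)..1, ∫ b in (0:ℝ)..1, ∫ c in (0:ℝ)..1,
      ∫ d in (0:ℝ)..1, ∫ k in (0:ℝ)..1, ∫ x in (0:ℝ)..1, F a b c d k x) =
    ∫ x in (0:ℝ)..1, ∫ a in (0:ℝ)..1, ∫ b in (0:ℝ)..1, ∫ c in (0:ℝ)..1,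
      ∫ d in (0:ℝ)..1, ∫ k in (0:ℝ)..1, F a b c d k x := by
  have h₁ (a b c d : ℝ) := integral_swap_unit (f := fun k x => F a b c d k x)
    (by apply hF <;> fun_prop)
  have h₂ (a b c : ℝ) := integral_swap_unit
    (f := fun d x => ∫ k in (0:ℝ)..1, F a b c d k x)
    (by apply continuous_integral_unit; apply hF <;> fun_prop)
  have h₃ (a b : ℝ) := integral_swap_unit
    (f := fun c x => ∫ d in (0:ℝ)..1, ∫ k in (0:ℝ)..1, F a b c d k x)
    (by iterate 2 apply continuous_integral_unit
        apply hF <;> fun_prop)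
  have h₄ (a : ℝ) := integral_swap_unit
    (f := fun b x => ∫ c in (0:ℝ)..1, ∫ d in (0:ℝ)..1, ∫ k in (0:ℝ)..1, F a b c d k x)
    (by iterate 3 apply continuous_integral_unit
        apply hF <;> fun_prop)
  have h₅ := integral_swap_unit
    (f := fun a x => ∫ b in (0:ℝ)..1, ∫ c in (0:ℝ)..1, ∫ d in (0:ℝ)..1, ∫ k in (0:ℝ)..1,
      F a b c d k x)
    (by iterate 4 apply continuous_integral_unit
        apply hF <;> fun_prop)
  simp only [h₁, h₂, h₃, h₄, h₅]

/-- The degenerate Whittaker vector on `N` with character on the third simple root,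
expressed via the minimal-orbit Fourier coefficient (Table 3 / Appendix A). -/
theorem sl4_min_orbit_gives_third_whittaker
    (φ : Matrix (Fin 4) (Fin 4) ℝ → ℂ) (hcont : Continuous φ)
    (hinv : ∀ γ : Matrix (Fin 4) (Fin 4) ℤ, γ.det = 1 →
      ∀ g : Matrix (Fin 4) (Fin 4) ℝ, φ (γ.map (fun z => (z : ℝ)) * g) = φ g)
    (m : ℤ) (g : Matrix (Fin 4) (Fin 4) ℝ) :
    (∫ u₅ in (0:ℝ)..1, ∫ u₄ in (0:ℝ)..1, ∫ u₃ in (0:ℝ)..1,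
      ∫ u₂ in (0:ℝ)..1, ∫ u₁ in (0:ℝ)..1, ∫ x in (0:ℝ)..1,
        φ (n 0 0 x 0 0 0 * w₃.map (fun z => (z : ℝ)) * n u₁ u₂ u₃ u₄ u₅ 0 * g) *
          e (-(m : ℝ) * x)) =
      ∫ x₆ in (0:ℝ)..1, ∫ x₅ in (0:ℝ)..1, ∫ x₄ in (0:ℝ)..1,
        ∫ x₃ in (0:ℝ)..1, ∫ x₂ in (0:ℝ)..1, ∫ x₁ in (0:ℝ)..1,
          φ (n x₁ x₂ x₃ x₄ x₅ x₆ * g) * e (-(m : ℝ) * x₆) := by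
  have hφ (u₁ u₂ u₃ u₄ u₅ x : ℝ) :
      φ (n 0 0 x 0 0 0 * w₃.map (fun z => (z : ℝ)) * n u₁ u₂ u₃ u₄ u₅ 0 * g) =
        φ (n u₁ u₂ u₃ u₄ u₅ x * g) := by
    rw [n_mul_w₃_mul_n, Matrix.mul_assoc, hinv w₃ w₃_det]
  simp only [hφ]
  refine integral_rotate
    (F := fun u₅ u₄ u₃ u₂ u₁ x => φ (n u₁ u₂ u₃ u₄ u₅ x * g) * e (-(m : ℝ) * x)) ?_
  intro P _ u₅ u₄ u₃ u₂ u₁ x h₅ h₄ h₃ h₂ h₁ hx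
  have hn : Continuous fun p => n (u₁ p) (u₂ p) (u₃ p) (u₄ p) (u₅ p) (x p) := by
    refine continuous_matrix fun i j => ?_
    fin_cases i <;> fin_cases j <;> simp [n] <;> fun_prop
  have he : Continuous fun p => e (-(m : ℝ) * x p) := by
    unfold e
    fun_prop
  exact (hcont.comp (hn.mul continuous_const)).mul he
end

section
/- Let φ : M₄(ℝ) → ℂ be continuous with φ(γ·g) = φ(g) for every g ∈ M₄(ℝ) and every integer 4×4 matrix γ of determinant 1, and let w₅ be the integer matrix with rows (0,1,0,0), (−1,0,0,0), (0,0,1,0), (0,0,0,1). Then for every integer m and every g ∈ M₄(ℝ): ∫_{[0,1]²} ∫₀¹ φ( n(0,0,x,0,0,0) · w₅ · n′(u₁,u₂,0) · g ) · e(−m·x) dx du₁ du₂ = ∫_{[0,1]³} φ( n′(x₁,x₂,x₃) · g ) · e(−m·x₃) dx₁ dx₂ dx₃. (The Whittaker vector on N′ = [N,N] with character on the (2,4)-entry expressed via the minimal-orbit Fourier coefficient; Table 3 / Appendix A.) -/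
/-!
Conjugation by `w₅` carries the `(1,4)` root subgroup to the `(2,4)` root subgroup, with no change
of sign: `n(0,0,x,0,0,0) w₅ = w₅ n′(0,0,x)` (`n_mul_w₅_mul_n'`). Left invariance of `φ` under `w₅`
then makes the two integrands equal, and the two sides differ only in the order of integration over
the cube, which Fubini's theorem for continuous functions (`integral_rotate_of_continuous`)
allows to be changed.
-/

open MeasureTheory

/-- The `4×4` matrix with rows `(1,0,x₁,x₂)`, `(0,1,0,x₃)`, `(0,0,1,0)`, `(0,0,0,1)`,
parametrizing `N′ = [N,N]`. -/
noncomputable def n' (x₁ x₂ x₃ : ℝ) : Matrix (Fin 4) (Fin 4) ℝ :=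
  !![1, 0, x₁, x₂; 0, 1, 0, x₃; 0, 0, 1, 0; 0, 0, 0, 1]

/-- The Weyl element `w₅` as an integer matrix of determinant one. -/
def w₅ : Matrix (Fin 4) (Fin 4) ℤ :=
  !![0, 1, 0, 0; -1, 0, 0, 0; 0, 0, 1, 0; 0, 0, 0, 1]

/-- Since `N′` is abelian, the conjugated factor `n′(0,0,x)` merges with `n′(u₁,u₂,0)`. -/
lemma n_mul_w₅_mul_n' (x u₁ u₂ : ℝ) :
    n 0 0 x 0 0 0 * w₅.map (fun z => (z : ℝ)) * n' u₁ u₂ 0 =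
      w₅.map (fun z => (z : ℝ)) * n' u₁ u₂ x := by
  ext i j
  fin_cases i <;> fin_cases j <;>
    simp [n, n', w₅, Matrix.mul_apply, Matrix.map_apply, Fin.sum_univ_four,
      -Matrix.cons_mul]

lemma det_w₅ : w₅.det = 1 := by
  decide

lemma continuous_e : Continuous e := by
  unfold e
  fun_prop

lemma continuous_n' : Continuous fun p : ℝ × ℝ × ℝ => n' p.1 p.2.1 p.2.2 := by
  refine continuous_matrix fun i j => ?_
  fin_cases i <;> fin_cases j <;> simp [n'] <;> fun_prop

lemma integral_swap_of_continuous (f : ℝ → ℝ → ℂ) (hf : Continuous (Function.uncurry f)) :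
    (∫ x in (0:ℝ)..1, ∫ y in (0:ℝ)..1, f x y) = ∫ y in (0:ℝ)..1, ∫ x in (0:ℝ)..1, f x y := by
  refine intervalIntegral_intervalIntegral_swap ?_
  refine (hf.continuousOn.integrableOn_compact
    (isCompact_uIcc.prod isCompact_uIcc)).mono_set
    (Set.prod_mono Set.uIoc_subset_uIcc Set.uIoc_subset_uIcc)

lemma integral_rotate_of_continuous (F : ℝ → ℝ → ℝ → ℂ)
    (hF : Continuous fun p : ℝ × ℝ × ℝ => F p.1 p.2.1 p.2.2) :
    (∫ a in (0:ℝ)..1, ∫ b in (0:ℝ)..1, ∫ c in (0:ℝ)..1, F a b c) =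
      ∫ c in (0:ℝ)..1, ∫ a in (0:ℝ)..1, ∫ b in (0:ℝ)..1, F a b c := by
  have inner : ∀ a : ℝ, (∫ b in (0:ℝ)..1, ∫ c in (0:ℝ)..1, F a b c) =
      ∫ c in (0:ℝ)..1, ∫ b in (0:ℝ)..1, F a b c := fun a =>
    integral_swap_of_continuous (F a)
      (hF.comp (by fun_prop : Continuous fun q : ℝ × ℝ => (a, q.1, q.2)))
  simp_rw [inner]
  have hG : Continuous fun r : (ℝ × ℝ) × ℝ => F r.1.1 r.2 r.1.2 :=
    hF.comp (by fun_prop : Continuous fun r : (ℝ × ℝ) × ℝ => (r.1.1, r.2, r.1.2))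
  -- The integral over `b` is continuous in `(a, c)`, so Fubini applies once more.
  exact integral_swap_of_continuous (fun a c => ∫ b in (0:ℝ)..1, F a b c)
    (intervalIntegral.continuous_parametric_intervalIntegral_of_continuous'
      (f := fun (q : ℝ × ℝ) (b : ℝ) => F q.1 b q.2) hG 0 1)

/-- The Whittaker vector on `N′ = [N,N]` with character on the `(2,4)`-entry, expressed
via the minimal-orbit Fourier coefficient (Table 3 / Appendix A). -/
theorem sl4_min_orbit_gives_Nprime_24_whittaker
    (φ : Matrix (Fin 4) (Fin 4) ℝ → ℂ) (hcont : Continuous φ)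
    (hinv : ∀ γ : Matrix (Fin 4) (Fin 4) ℤ, γ.det = 1 →
      ∀ g : Matrix (Fin 4) (Fin 4) ℝ, φ (γ.map (fun z => (z : ℝ)) * g) = φ g)
    (m : ℤ) (g : Matrix (Fin 4) (Fin 4) ℝ) :
    (∫ u₂ in (0:ℝ)..1, ∫ u₁ in (0:ℝ)..1, ∫ x in (0:ℝ)..1,
        φ (n 0 0 x 0 0 0 * w₅.map (fun z => (z : ℝ)) * n' u₁ u₂ 0 * g) *
          e (-(m : ℝ) * x)) =
      ∫ x₃ in (0:ℝ)..1, ∫ x₂ in (0:ℝ)..1, ∫ x₁ in (0:ℝ)..1,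
        φ (n' x₁ x₂ x₃ * g) * e (-(m : ℝ) * x₃) := by
  have key : ∀ u₂ u₁ x : ℝ,
      φ (n 0 0 x 0 0 0 * w₅.map (fun z => (z : ℝ)) * n' u₁ u₂ 0 * g) = φ (n' u₁ u₂ x * g) := by
    intro u₂ u₁ x
    rw [n_mul_w₅_mul_n', Matrix.mul_assoc, hinv w₅ det_w₅]
  simp_rw [key]
  refine integral_rotate_of_continuous
    (fun u₂ u₁ x => φ (n' u₁ u₂ x * g) * e (-(m : ℝ) * x)) ?_
  have h1 : Continuous fun p : ℝ × ℝ × ℝ => n' p.2.1 p.1 p.2.2 * g :=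
    (continuous_n'.comp (by fun_prop :
      Continuous fun p : ℝ × ℝ × ℝ => (p.2.1, p.1, p.2.2))).matrix_mul continuous_const
  have h2 : Continuous fun p : ℝ × ℝ × ℝ => -(m : ℝ) * p.2.2 := by fun_prop
  exact (hcont.comp h1).mul (continuous_e.comp h2)
end
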